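/- arXiv:2304.10822 — 7 statements merged into one kernel-verified Lean document; each statement's English description precedes it below -/
import Mathlib

section
/- For every natural number k and every integer n, there exists a unique ψ ∈ (nπ − π/2, nπ + π/2) such that cos(ψ)^(2k) + tan(ψ) = 0. -/
open Real

lemma aux_shift (k : ℕ) (n : ℤ) (x : ℝ) :
    cos (x - n * π) ^ (2*k) + tan (x - n * π) = cos x ^ (2*k) + tan x := by
  rw [Real.tan_sub_int_mul_pi, Real.cos_sub_int_mul_pi, pow_mul, pow_mul, mul_pow]
  congr 2
  rcases Int.even_or_odd n with h | h
  · simp [h.neg_one_zpow]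
  · simp [h.neg_one_zpow]

lemma aux_neg (k : ℕ) (x : ℝ) (hx : x ∈ Set.Ioo (-(π/2)) (π/2))
    (h : cos x ^ (2*k) + tan x = 0) : x < 0 := by
  by_contra! h0
  have h1 := Real.tan_nonneg_of_nonneg_of_le_pi_div_two h0 hx.2.le
  have h2 : 0 < cos x ^ (2*k) := pow_pos (Real.cos_pos_of_mem_Ioo hx) _
  linarith

lemma aux_lt (k : ℕ) (x y : ℝ) (hx : -(π/2) < x) (hxy : x < y) (hy : y < 0) :
    cos x ^ (2*k) + tan x < cos y ^ (2*k) + tan y := by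
  have hp := Real.pi_pos
  have h1 : tan x < tan y :=
    Real.tan_lt_tan_of_lt_of_lt_pi_div_two hx (by linarith) hxy
  have h2 : cos x ≤ cos y := by
    rw [← Real.cos_neg x, ← Real.cos_neg y]
    exact Real.cos_le_cos_of_nonneg_of_le_pi (by linarith) (by linarith) (by linarith)
  have h3 : 0 ≤ cos x := (Real.cos_pos_of_mem_Ioo ⟨hx, by linarith⟩).le
  have h4 := pow_le_pow_left₀ h3 h2 (2*k)
  linarith

lemma aux_ex (k : ℕ) :
    ∃ x ∈ Set.Ioo (-(π/2)) (π/2), cos x ^ (2*k) + tan x = 0 := by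
  have hp := Real.pi_pos
  have hc : ContinuousOn (fun x => cos x ^ (2*k) + tan x) (Set.Icc (-(π/4)) 0) := by
    apply ContinuousOn.add (by fun_prop)
    refine Real.continuousOn_tan_Ioo.mono ?_
    intro x hx
    exact ⟨by linarith [hx.1], by linarith [hx.2]⟩
  have h := intermediate_value_Icc (by linarith : -(π/4) ≤ 0) hc
  have h0 : (0:ℝ) ∈ Set.Icc (cos (-(π/4)) ^ (2*k) + tan (-(π/4))) (cos 0 ^ (2*k) + tan 0) := by
    constructor
    · rw [Real.tan_neg, Real.tan_pi_div_four]
      have : cos (-(π/4)) ^ (2*k) ≤ 1 := by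
        apply pow_le_one₀ _ (Real.cos_le_one _)
        exact Real.cos_nonneg_of_mem_Icc ⟨by linarith, by linarith⟩
      linarith
    · simp
  obtain ⟨x, hx, hx0⟩ := h h0
  exact ⟨x, ⟨by linarith [hx.1], by linarith [hx.2]⟩, hx0⟩

/-- For every `k : ℕ` and every integer `n`, there is a unique
`ψ ∈ (nπ - π/2, nπ + π/2)` with `cos ψ ^ (2k) + tan ψ = 0`. -/
theorem unique_zero_cos_pow_add_tan_shifted (k : ℕ) (n : ℤ) :
    ∃! ψ : ℝ, ψ ∈ Set.Ioo ((n : ℝ) * π - π/2) ((n : ℝ) * π + π/2) ∧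
      cos ψ ^ (2*k) + tan ψ = 0 := by
  obtain ⟨x, hx, h0⟩ := aux_ex k
  refine ⟨x + n * π, ⟨⟨by linarith [hx.1], by linarith [hx.2]⟩, ?_⟩, ?_⟩
  · rw [← aux_shift k n, add_sub_cancel_right, h0]
  · rintro y ⟨hy, hy0⟩
    rw [← aux_shift k n] at hy0
    have hy' : y - n * π ∈ Set.Ioo (-(π/2)) (π/2) :=
      ⟨by linarith [hy.1], by linarith [hy.2]⟩
    have a := aux_neg k _ hx h0
    have b := aux_neg k _ hy' hy0
    rcases lt_trichotomy x (y - n * π) with h | h | h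
    · have := aux_lt k _ _ hx.1 h b
      linarith
    · linarith
    · have := aux_lt k _ _ hy'.1 h a
      linarith
end

section
/- For every natural number k, there exists a unique ψ ∈ (0, π) such that cos(ψ)^(2k+1) + sin(ψ) = 0; moreover, this unique solution lies in (π/2, π). -/
open Real

/-- For every `k : ℕ` there is a unique `ψ ∈ (0, π)` with
`cos ψ ^ (2k+1) + sin ψ = 0`; moreover this unique solution lies in `(π/2, π)`. -/
theorem unique_zero_cos_odd_pow_add_sin (k : ℕ) :
    ∃ ψ : ℝ, ψ ∈ Set.Ioo (π/2) π ∧ cos ψ ^ (2*k+1) + sin ψ = 0 ∧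
      ∀ ψ' ∈ Set.Ioo 0 π, cos ψ' ^ (2*k+1) + sin ψ' = 0 → ψ' = ψ := by
  have hpi := pi_pos
  have hodd : Odd (2*k+1) := ⟨k, rfl⟩
  have anti : ∀ a b : ℝ, π/2 ≤ a → a < b → b ≤ π →
      cos b ^ (2*k+1) + sin b < cos a ^ (2*k+1) + sin a := by
    intro a b ha hab hb
    have h1 : cos b < cos a := cos_lt_cos_of_nonneg_of_le_pi (by linarith) hb hab
    have h2 : cos b ^ (2*k+1) < cos a ^ (2*k+1) := hodd.strictMono_pow h1
    have h3 : sin (π - b) < sin (π - a) :=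
      sin_lt_sin_of_lt_of_le_pi_div_two (by linarith) (by linarith) (by linarith)
    rw [sin_pi_sub, sin_pi_sub] at h3
    linarith
  have hc : ContinuousOn (fun x : ℝ => cos x ^ (2*k+1) + sin x) (Set.Icc (π/2) π) := by
    fun_prop
  have hivt := intermediate_value_Ioo' (by linarith : π/2 ≤ π) hc
  have h0 : (0:ℝ) ∈ Set.Ioo (cos π ^ (2*k+1) + sin π) (cos (π/2) ^ (2*k+1) + sin (π/2)) := by
    rw [cos_pi, hodd.neg_one_pow, sin_pi, cos_pi_div_two, sin_pi_div_two]
    simp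
  obtain ⟨ψ, hψ, hz⟩ := hivt h0
  refine ⟨ψ, hψ, hz, ?_⟩
  intro x hx hxz
  have hz' : cos ψ ^ (2*k+1) + sin ψ = 0 := hz
  have hxl : π/2 ≤ x := by
    by_contra! h
    have h1 : 0 ≤ cos x := cos_nonneg_of_neg_pi_div_two_le_of_le (by linarith [hx.1]) h.le
    have h2 := sin_pos_of_pos_of_lt_pi hx.1 hx.2
    have h3 := pow_nonneg h1 (2*k+1)
    linarith
  rcases lt_trichotomy x ψ with h | h | h
  · linarith [anti x ψ hxl h hψ.2.le]
  · exact h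
  · linarith [anti ψ x hψ.1.le h hx.2.le]
end

section
/- For every natural number k, the set of zeros of f_k in the interval [0, π] is exactly {0, ψ*_k, π}, where ψ*_k is the unique ψ ∈ (0, π) with cos(ψ)^(2k+1) + sin(ψ) = 0. -/
open Real

/-- The desingularised blow-up dynamics on the circle for `ẋ = x^(2k+1) + ε`. -/
noncomputable def f (k : ℕ) (ψ : ℝ) : ℝ :=
  ((2*(k:ℝ)+1) * sin ψ * (cos ψ ^ (2*k+1) + sin ψ)) / ((k:ℝ) * cos (2*ψ) - (k:ℝ) - 1)

theorem blowup_aux (k : ℕ) (a b : ℝ) (ha : a ∈ Set.Ioo 0 π) (hb : b ∈ Set.Ioo 0 π)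
    (h1 : cos a ^ (2*k+1) + sin a = 0) (h2 : cos b ^ (2*k+1) + sin b = 0) : ¬ a < b := by
  intro hab
  have hodd : Odd (2*k+1) := ⟨k, rfl⟩
  have hpa : π / 2 < a := by
    by_contra hc
    have hs := sin_pos_of_pos_of_lt_pi ha.1 ha.2
    have hcos : 0 ≤ cos a := cos_nonneg_of_mem_Icc ⟨by linarith [ha.1, pi_pos], by linarith⟩
    have := pow_nonneg hcos (2*k+1)
    linarith
  have hcl : cos b < cos a := cos_lt_cos_of_nonneg_of_le_pi ha.1.le hb.2.le hab
  have hp : cos b ^ (2*k+1) < cos a ^ (2*k+1) := hodd.strictMono_pow hcl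
  have hs : sin (π - b) < sin (π - a) :=
    sin_lt_sin_of_lt_of_le_pi_div_two (by linarith [hb.2, pi_pos]) (by linarith) (by linarith)
  rw [sin_pi_sub, sin_pi_sub] at hs
  linarith

/-- The zeros of `f k` in `[0, π]` are exactly `0`, `π`, and the unique
`ψ* ∈ (0, π)` with `cos ψ* ^ (2k+1) + sin ψ* = 0`. -/
theorem zeros_of_blowup_field (k : ℕ) (ψs : ℝ)
    (hψs : ψs ∈ Set.Ioo 0 π) (hzero : cos ψs ^ (2*k+1) + sin ψs = 0) :
    {ψ ∈ Set.Icc (0:ℝ) π | f k ψ = 0} = {0, ψs, π} := by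
  ext x
  simp only [Set.mem_setOf_eq, Set.mem_insert_iff, Set.mem_singleton_iff]
  constructor
  · rintro ⟨⟨hx0, hx1⟩, hf⟩
    rcases hx0.eq_or_lt with h0 | h0
    · exact Or.inl h0.symm
    rcases hx1.eq_or_lt with h1 | h1
    · exact Or.inr (Or.inr h1)
    right; left
    have hs := sin_pos_of_pos_of_lt_pi h0 h1
    have hk : (0:ℝ) ≤ k := Nat.cast_nonneg k
    have hd : (k:ℝ) * cos (2*x) - (k:ℝ) - 1 ≠ 0 := by
      have := mul_le_mul_of_nonneg_left (cos_le_one (2*x)) hk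
      intro h
      linarith
    have hz : cos x ^ (2*k+1) + sin x = 0 := by
      rw [f, div_eq_zero_iff] at hf
      have h3 := hf.resolve_right hd
      have hne : (2*(k:ℝ)+1) * sin x ≠ 0 := by positivity
      exact (mul_eq_zero.mp h3).resolve_left hne
    exact le_antisymm (not_lt.mp (blowup_aux k ψs x hψs ⟨h0, h1⟩ hzero hz))
      (not_lt.mp (blowup_aux k x ψs ⟨h0, h1⟩ hψs hz hzero))
  · rintro (rfl | rfl | rfl)
    · exact ⟨⟨le_rfl, pi_pos.le⟩, by simp [f]⟩
    · exact ⟨⟨hψs.1.le, hψs.2.le⟩, by simp [f, hzero]⟩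
    · exact ⟨⟨pi_pos.le, le_rfl⟩, by simp [f]⟩
end

section
/- For every natural number k, the function f_k is differentiable at ψ = 0 and at ψ = π, with derivative equal to −(2k+1) at both points. In particular both derivatives are strictly negative, so the equilibria ψ = 0 and ψ = π of ψ̇ = f_k(ψ) are hyperbolic and attracting for all k. -/
open Real

theorem f_aux (k : ℕ) (x : ℝ) (hs : sin x = 0) (hp : cos x ^ (2*k+1) = cos x)
    (hc : cos x * cos x = 1) (h2 : cos (2*x) = 1) :
    HasDerivAt (f k) (-(2*(k:ℝ)+1)) x := by
  have d1 := (Real.hasDerivAt_sin x).const_mul (2*(k:ℝ)+1)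
  have d2 := ((Real.hasDerivAt_cos x).pow (2*k+1)).add (Real.hasDerivAt_sin x)
  have d3 := ((((hasDerivAt_id x).const_mul (2:ℝ)).cos.const_mul (k:ℝ)).sub_const (k:ℝ)).sub_const 1
  have hd : (k:ℝ) * cos (2 * id x) - (k:ℝ) - 1 ≠ 0 := by
    simp [h2]
  have d := (d1.mul d2).div d3 hd
  refine HasDerivAt.congr_deriv d ?_
  simp [hs, hp, h2]
  linear_combination (-(2*(k:ℝ)+1)) * hc

/-- `f k` is differentiable at `0` and at `π` with derivative `-(2k+1)` at both
points; in particular both derivatives are strictly negative, so the equilibria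
`ψ = 0` and `ψ = π` are hyperbolic and attracting for all `k`. -/
theorem deriv_at_fast_foliation_equilibria (k : ℕ) :
    HasDerivAt (f k) (-(2*(k:ℝ)+1)) 0 ∧ HasDerivAt (f k) (-(2*(k:ℝ)+1)) π ∧
      -(2*(k:ℝ)+1) < 0 := by
  refine ⟨f_aux k 0 (by simp) (by simp) (by simp) (by simp), f_aux k π (by simp) ?_ (by simp) (by simp), ?_⟩
  · simp [pow_succ, pow_mul]
  · have : (0:ℝ) ≤ k := Nat.cast_nonneg k
    linarith
end

section
/- For every natural number k, the derivative of f_k at ψ*_k is strictly positive; that is, the unique interior equilibrium ψ*_k ∈ (π/2, π) of ψ̇ = f_k(ψ) on [0, π] is a hyperbolic repelling equilibrium (a source). -/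
open Real

/-- The derivative of `f k` at the unique interior equilibrium
`ψ* ∈ (0, π)` (which lies in `(π/2, π)`) is strictly positive: `ψ*` is a
hyperbolic repelling equilibrium (a source). -/
theorem interior_equilibrium_is_source (k : ℕ) (ψs : ℝ)
    (hψs : ψs ∈ Set.Ioo 0 π) (hzero : cos ψs ^ (2*k+1) + sin ψs = 0) :
    0 < deriv (f k) ψs := by
  have hs : 0 < sin ψs := sin_pos_of_pos_of_lt_pi hψs.1 hψs.2
  have hev : 0 ≤ cos ψs ^ (2*k) := by
    rw [pow_mul]; positivity
  have hc : cos ψs < 0 := by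
    by_contra h
    have : 0 ≤ cos ψs ^ (2*k+1) := pow_nonneg (not_lt.mp h) _
    linarith
  have hk : (0:ℝ) ≤ k := Nat.cast_nonneg k
  have hD : (k:ℝ) * cos (2*ψs) - (k:ℝ) - 1 < 0 := by
    nlinarith [cos_le_one (2*ψs)]
  have hd2 : HasDerivAt (fun x : ℝ => cos (2*x)) (-sin (2*ψs) * (2*1)) ψs :=
    ((hasDerivAt_id ψs).const_mul 2).cos
  have hden := ((hd2.const_mul (k:ℝ)).sub_const (k:ℝ)).sub_const 1
  have hg := ((hasDerivAt_cos ψs).pow (2*k+1)).add (hasDerivAt_sin ψs)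
  have hnum := ((hasDerivAt_sin ψs).const_mul (2*(k:ℝ)+1)).mul hg
  have hf := hnum.div hden hD.ne
  have hf' : deriv (f k) ψs = _ := hf.deriv
  rw [hf']
  simp only [Pi.add_apply, Pi.pow_apply, Pi.mul_apply, hzero, mul_zero, zero_mul, zero_add, sub_zero,
    Nat.add_sub_cancel]
  have hneg : (2*(k:ℝ)+1) * sin ψs * (((2*k+1 : ℕ):ℝ) * cos ψs ^ (2*k) * -sin ψs + cos ψs) < 0 := by
    apply mul_neg_of_pos_of_neg (by positivity)
    have : 0 ≤ ((2*k+1 : ℕ):ℝ) * cos ψs ^ (2*k) * sin ψs := by positivity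
    linarith
  exact div_pos (mul_pos_of_neg_of_neg hneg hD) (by have := hD.ne; positivity)
end

section
/- Let Θ(θ, φ) = (1/16)·[sin(θ)·(6·cos(2θ) − 5·(cos(4θ) + 1))·sin³(φ) + 8·(cos(φ)/sin(φ))·(cos(θ) − 2·sin(θ))]. Then for θ₀ = arctan(1/2) and also for θ₀ = arctan(1/2) − π, one has Θ(θ₀, φ) = 0 for every φ ∈ (0, π); hence the meridians θ = θ₀ on the blow-up sphere are invariant, giving the singular canard connection between the attracting equilibrium at θ = arctan(1/2) − π and the repelling equilibrium at θ = arctan(1/2). -/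
open Real

/-- The θ-component of the blown-up vector field on the sphere for the
degenerate transcritical example. -/
noncomputable def Θ (θ φ : ℝ) : ℝ :=
  (1/16) * (sin θ * (6 * cos (2*θ) - 5 * (cos (4*θ) + 1)) * sin φ ^ 3 +
    8 * (cos φ / sin φ) * (cos θ - 2 * sin θ))

/-- The meridians `θ = arctan (1/2)` and `θ = arctan (1/2) - π` of the blow-up
sphere are invariant: `Θ` vanishes identically along them. This gives the
singular canard connection between the attracting equilibrium at
`arctan (1/2) - π` and the repelling equilibrium at `arctan (1/2)`. -/
theorem canard_meridians_transcritical :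
    ∀ φ ∈ Set.Ioo (0:ℝ) π,
      Θ (arctan (1/2)) φ = 0 ∧ Θ (arctan (1/2) - π) φ = 0 := by
  intro φ _
  have hc : 0 < cos (arctan (1/2)) := cos_arctan_pos _
  have hs : cos (arctan (1/2)) = 2 * sin (arctan (1/2)) := by
    have h := tan_arctan (1/2)
    rw [tan_eq_sin_div_cos, div_eq_iff hc.ne'] at h
    linarith
  have h1 := sin_sq_add_cos_sq (arctan (1/2))
  have hq : cos (arctan (1/2)) ^ 2 = 4/5 := by
    have : sin (arctan (1/2)) = cos (arctan (1/2)) / 2 := by linarith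
    rw [this] at h1
    linarith
  have h2 : cos (2 * arctan (1/2)) = 3/5 := by
    rw [cos_two_mul, hq]; norm_num
  have h4 : cos (4 * arctan (1/2)) = -7/25 := by
    rw [show 4 * arctan (1/2) = 2 * (2 * arctan (1/2)) by ring, cos_two_mul, h2]; norm_num
  have h2' : cos (2 * (arctan (1/2) - π)) = 3/5 := by
    rw [show 2 * (arctan (1/2) - π) = 2 * arctan (1/2) - 2 * π by ring, cos_sub_two_pi, h2]
  have h4' : cos (4 * (arctan (1/2) - π)) = -7/25 := by
    rw [show 4 * (arctan (1/2) - π) = 2 * (2 * (arctan (1/2) - π)) by ring, cos_two_mul, h2']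
    norm_num
  constructor
  · unfold Θ
    rw [h2, h4, hs]; ring
  · unfold Θ
    rw [h2', h4', cos_sub_pi, sin_sub_pi, hs]; ring
end

section
/- The set {θ ∈ (−π, π] : −3·sin²(2θ) + 8·sin(θ)·cos⁴(θ) + 4·sin²(θ)·cos²(θ) = 0} is exactly the six-element set {0, π, π/2, −π/2, arcsin(1/φ), π − arcsin(1/φ)}, where φ = (1 + √5)/2 is the golden ratio (so 1/φ = (√5 − 1)/2). -/
open Real

theorem numer_factor (θ : ℝ) :
    -3 * sin (2*θ) ^ 2 + 8 * sin θ * cos θ ^ 4 + 4 * sin θ ^ 2 * cos θ ^ 2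
      = 8 * sin θ * cos θ ^ 2 * (1 - sin θ ^ 2 - sin θ) := by
  rw [sin_two_mul, ← cos_sq']; ring

theorem golden_bounds : 0 < 1/((1 + Real.sqrt 5)/2) ∧ 1/((1 + Real.sqrt 5)/2) < 1 ∧
    1 - (1/((1 + Real.sqrt 5)/2))^2 - 1/((1 + Real.sqrt 5)/2) = 0 := by
  have h5 : Real.sqrt 5 ^ 2 = 5 := Real.sq_sqrt (by norm_num)
  have h0 : 0 ≤ Real.sqrt 5 := Real.sqrt_nonneg 5
  have h1 : 1 < Real.sqrt 5 := by nlinarith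
  have e : 1/((1 + Real.sqrt 5)/2) = (Real.sqrt 5 - 1)/2 := by
    field_simp; nlinarith
  rw [e]
  refine ⟨by linarith, by nlinarith, by nlinarith⟩

/-- The equilibria on the equator of the blow-up sphere for the degenerate
pitchfork example: the zeros in `(-π, π]` of the numerator of the equatorial
dynamics are exactly `0, π, π/2, -π/2, arcsin (1/φ), π - arcsin (1/φ)`,
where `φ = (1 + √5)/2` is the golden ratio. -/
theorem equatorial_equilibria_pitchfork :
    {θ ∈ Set.Ioc (-π) π |
        -3 * sin (2*θ) ^ 2 + 8 * sin θ * cos θ ^ 4 + 4 * sin θ ^ 2 * cos θ ^ 2 = 0} =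
      ({0, π, π/2, -(π/2), arcsin (1/((1 + Real.sqrt 5)/2)),
        π - arcsin (1/((1 + Real.sqrt 5)/2))} : Set ℝ) := by
  obtain ⟨g0, g1, hg⟩ := golden_bounds
  generalize 1/((1 + Real.sqrt 5)/2) = g at *
  have hpi := Real.pi_pos
  have hs : sin (arcsin g) = g := sin_arcsin (by linarith) (by linarith)
  have ha0 : 0 < arcsin g := arcsin_pos.2 g0
  have ha1 : arcsin g ≤ π/2 := arcsin_le_pi_div_two g
  ext θ
  simp only [Set.mem_setOf_eq, numer_factor, Set.mem_Ioc, Set.mem_insert_iff,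
    Set.mem_singleton_iff]
  constructor
  · rintro ⟨⟨hl, hu⟩, h⟩
    rcases mul_eq_zero.1 h with h | h
    · rcases mul_eq_zero.1 h with h | h
      · have h : sin θ = 0 := by linarith
        rcases hu.lt_or_eq with hu | hu
        · left; exact (sin_eq_zero_iff_of_lt_of_lt hl hu).1 h
        · right; left; exact hu
      · have h : cos θ = 0 := by simpa using h
        rcases lt_trichotomy θ (π/2) with h1 | h1 | h1
        · rcases lt_trichotomy θ (-(π/2)) with h2 | h2 | h2
          · have := cos_neg_of_pi_div_two_lt_of_lt (x := -θ) (by linarith) (by linarith)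
            rw [cos_neg] at this; linarith
          · simp [h2]
          · have := cos_pos_of_mem_Ioo ⟨h2, h1⟩
            linarith
        · simp [h1]
        · have := cos_neg_of_pi_div_two_lt_of_lt h1 (by linarith)
          linarith
    · have hmul : (sin θ - g) * (sin θ + g + 1) = 0 := by linarith
      have hge := neg_one_le_sin θ
      have h : sin θ = g := by
        rcases mul_eq_zero.1 hmul with h | h <;> linarith
      have hθ : 0 < θ := by
        by_contra hc
        have := sin_nonpos_of_nonpos_of_neg_pi_le (not_lt.1 hc) hl.le
        linarith
      rcases le_total θ (π/2) with h1 | h1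
      · have := arcsin_sin (x := θ) (by linarith) h1
        rw [h] at this; simp [this]
      · have := arcsin_sin (x := π - θ) (by linarith) (by linarith)
        rw [sin_pi_sub, h] at this
        simp [this]
  · rintro (h | h | h | h | h | h) <;> subst h
    · simp [hpi, hpi.le]
    · simp [hpi]
    · refine ⟨⟨by linarith, by linarith⟩, by simp⟩
    · refine ⟨⟨by linarith, by linarith⟩, by simp⟩
    · refine ⟨⟨by linarith, by linarith⟩, by rw [hs, hg, mul_zero]⟩
    · refine ⟨⟨by linarith, by linarith⟩, by rw [sin_pi_sub, hs, hg, mul_zero]⟩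
end
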